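/- Fix a ∈ ℤ and set b = max{|a|+1, 2}. For all v ∈ Ḣ^b_⋄ and w ∈ Ḣ^{a+1}_⋄ one has ‖B[v,w]‖_{Ḣ^a} + ‖B[w,v]‖_{Ḣ^a} ≲ ‖v‖_{Ḣ^b} ‖w‖_{Ḣ^{a+1}}. In particular, if a ≥ 1 then ‖B[v,w]‖_{Ḣ^a} + ‖B[w,v]‖_{Ḣ^a} ≲ ‖v‖_{Ḣ^{a+1}} ‖w‖_{Ḣ^{a+1}}. -/

import Mathlib

open MeasureTheory Set
open scoped BigOperators

noncomputable section

namespace NS2D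

/-- Nonzero Fourier frequencies of the 2D torus `Ω = 𝕋²`. -/
def Freq : Type := {k : ℤ × ℤ // k ≠ 0}

/-- Squared Euclidean modulus `|k|²` of a frequency. -/
def knormSq (k : Freq) : ℝ := (k.1.1 : ℝ) ^ 2 + (k.1.2 : ℝ) ^ 2

/-- Eigenvalue `λ_k = 4π²|k|²` of the periodic Laplacian `−Δ`. -/
def lam (k : Freq) : ℝ := 4 * Real.pi ^ 2 * knormSq k

/-- A divergence-free mean-zero vector field `u ∈ Ḣ_⋄` (or, more generally, an
element of the scale `Ḣ^α_⋄`) on the torus is represented by its Fourier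
coefficients `c k` along the orthonormal basis
`e_k(x) = |k|⁻¹ (k₂, −k₁) exp(2πi k·x)` of divergence-free fields. -/
abbrev Coef : Type := Freq → ℂ

/-- Negation of a frequency. -/
def fneg (k : Freq) : Freq := ⟨-k.1, neg_ne_zero.mpr k.2⟩

/-- The conjugacy condition expressing that the coefficients `c` represent a
real-valued vector field (note `e_{−k} = − conj e_k`). -/
def IsReal (c : Coef) : Prop := ∀ k, c (fneg k) = - (starRingEnd ℂ) (c k)

/-- Squared homogeneous Sobolev norm `‖·‖²_{Ḣ^α} = Σ_k λ_k^α |c k|²`. -/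
def hSq (α : ℝ) (c : Coef) : ℝ := ∑' k, lam k ^ α * ‖c k‖ ^ 2

/-- Homogeneous Sobolev norm `‖·‖_{Ḣ^α}`. -/
def hN (α : ℝ) (c : Coef) : ℝ := Real.sqrt (hSq α c)

/-- Finiteness of the `Ḣ^α`-norm. -/
def FinH (α : ℝ) (c : Coef) : Prop := Summable fun k => lam k ^ α * ‖c k‖ ^ 2

/-- Membership in `Ḣ^α_⋄` (real-valued field with finite `Ḣ^α`-norm). -/
def MemH (α : ℝ) (c : Coef) : Prop := IsReal c ∧ FinH α c

/-- Membership in `Ḣ^∞_⋄ = C^∞(Ω)² ∩ Ḣ_⋄`: all Sobolev norms are finite. -/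
def MemHinf (c : Coef) : Prop := ∀ α : ℝ, MemH α c

/-- Real `Ḣ^α` inner product `⟨·,·⟩_{Ḣ^α}` (for real-valued fields). -/
def hInner (α : ℝ) (c d : Coef) : ℝ := ∑' k, lam k ^ α * (c k * (starRingEnd ℂ) (d k)).re

/-- The `L²` inner product. -/
def innerC (c d : Coef) : ℂ := ∑' k, c k * (starRingEnd ℂ) (d k)

/-- The unit vector `(k₂, −k₁)/|k|` spanning the divergence-free direction at
frequency `k`. -/
def evec (k : Freq) : ℝ × ℝ :=
  ((k.1.2 : ℝ) / Real.sqrt (knormSq k), -((k.1.1 : ℝ)) / Real.sqrt (knormSq k))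

/-- Euclidean dot product on `ℝ²`. -/
def dotR (a b : ℝ × ℝ) : ℝ := a.1 * b.1 + a.2 * b.2

/-- A frequency as a real vector. -/
def fvec (k : Freq) : ℝ × ℝ := ((k.1.1 : ℝ), (k.1.2 : ℝ))

/-- Fourier coefficients (along the basis `e_k`) of the Leray-projected
transport nonlinearity `B[u,v] = P[(u·∇)v]`:
`(B[u,v])^(k) · ē_k = 2πi Σ_{m+n=k, n≠0} c_m d_n (e_m·n)(e_n·e_k)`. -/
def Bc (c d : Coef) : Coef := fun k =>
  (((2 * Real.pi : ℝ) : ℂ) * Complex.I) *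
    ∑' m : Freq,
      if h : k.1 - m.1 ≠ 0 then
        c m * d ⟨k.1 - m.1, h⟩ *
          (((dotR (evec m) (fvec ⟨k.1 - m.1, h⟩) *
            dotR (evec ⟨k.1 - m.1, h⟩) (evec k) : ℝ)) : ℂ)
      else 0

/-- The Laplacian `Δ` acting on the scale: `(Δu)^(k) = −λ_k û(k)`. -/
def lapC (c : Coef) : Coef := fun k => -((lam k : ℝ) : ℂ) * c k

/-- Continuity of a trajectory `t ↦ u(t)`, `t ∈ [0,T]`, for the `Ḣ^α`-norm:
`u ∈ C([0,T], Ḣ^α_⋄)`. -/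
def ContH (α : ℝ) (T : ℝ) (u : ℝ → Coef) : Prop :=
  ∀ t ∈ Icc (0:ℝ) T, ∀ ε > 0, ∃ δ > 0, ∀ s ∈ Icc (0:ℝ) T,
    |s - t| < δ → hN α (u s - u t) < ε

/-- Membership `u ∈ L²([0,T], Ḣ^α_⋄)`. -/
def MemL2H (α : ℝ) (T : ℝ) (u : ℝ → Coef) : Prop :=
  (∀ t ∈ Ioc (0:ℝ) T, MemH α (u t)) ∧
    IntegrableOn (fun t => hSq α (u t)) (Ioc 0 T)

/-- `u` is a strong solution on `[0,T]` of the (Leray-projected) periodic 2D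
Navier–Stokes equations `du/dt + νAu + B[u,u] = f`, `u(0) = θ`, posed in `Ḣ_⋄`:
the Fourier coefficients satisfy the corresponding system of ODEs on `(0,T]`,
the trajectory is continuous into `Ḣ¹_⋄` (in particular at `t = 0`), and lies
in `L²([0,T], Ḣ²_⋄)`. -/
structure IsNSSol (ν : ℝ) (f : Coef) (T : ℝ) (θ : Coef) (u : ℝ → Coef) : Prop where
  init : u 0 = θ
  real : ∀ t ∈ Icc (0:ℝ) T, IsReal (u t)
  deriv : ∀ (k : Freq), ∀ t ∈ Ioc (0:ℝ) T,
    HasDerivAt (fun s => u s k)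
      (f k - ((ν * lam k : ℝ) : ℂ) * u t k - Bc (u t) (u t) k) t
  contH1 : ContH 1 T u
  memL2H2 : MemL2H 2 T u

/-- `U` solves the linear parabolic equation
`dU/dt − νΔU + B[u₀, U] + B[U, u₁] = g`, `U(0) = ξ`, on `[0,T]`. -/
structure IsLinPSol (ν : ℝ) (u₀ u₁ : ℝ → Coef) (g : ℝ → Coef) (T : ℝ) (ξ : Coef)
    (U : ℝ → Coef) : Prop where
  init : U 0 = ξ
  real : ∀ t ∈ Icc (0:ℝ) T, IsReal (U t)
  deriv : ∀ (k : Freq), ∀ t ∈ Ioc (0:ℝ) T,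
    HasDerivAt (fun s => U s k)
      (g t k - ((ν * lam k : ℝ) : ℂ) * U t k - Bc (u₀ t) (U t) k - Bc (U t) (u₁ t) k) t

/-- `U = 𝕀_θ[ξ]` solves the linearisation of Navier–Stokes along the
trajectory `u₀`: `dU/dt − νΔU + B[u₀,U] + B[U,u₀] = 0`, `U(0) = ξ`. -/
def IsLinSol (ν : ℝ) (u₀ : ℝ → Coef) (T : ℝ) (ξ : Coef) (U : ℝ → Coef) : Prop :=
  IsLinPSol ν u₀ u₀ (fun _ => 0) T ξ U

/-- The heat semigroup `S_t = e^{νtΔ}` on the scale `Ḣ^α_⋄`. -/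
def heatS (ν t : ℝ) (c : Coef) : Coef := fun k =>
  ((Real.exp (-(ν * lam k * t)) : ℝ) : ℂ) * c k

/-- Duhamel representation of the solution of the periodic heat equation
`du/dt − νΔu = g`, `u(0) = h`. -/
def heatSol (ν : ℝ) (g : ℝ → Coef) (h : Coef) : ℝ → Coef := fun t k =>
  ((Real.exp (-(ν * lam k * t)) : ℝ) : ℂ) *
    (h k + ∫ s in (0:ℝ)..t, ((Real.exp (ν * lam k * s) : ℝ) : ℂ) * g s k)

/-- Real-linearity of a map on the coefficient space. -/
def IsLinMap (Λ : Coef → Coef) : Prop :=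
  (∀ c d, Λ (c + d) = Λ c + Λ d) ∧ ∀ (r : ℝ) (c : Coef), Λ (r • c) = r • Λ c

/-- `Λ` defines a compact (linear) operator `Ḣ^α_⋄ → Ḣ^β_⋄`: it is linear,
maps `Ḣ^α_⋄` into `Ḣ^β_⋄`, and the image of the `Ḣ^α`-unit ball is totally
bounded for the `Ḣ^β`-norm. -/
def IsCompactOp (α β : ℝ) (Λ : Coef → Coef) : Prop :=
  IsLinMap Λ ∧ (∀ c, MemH α c → MemH β (Λ c)) ∧
    ∀ ε > 0, ∃ S : Finset Coef, ∀ c, MemH α c → hN α c ≤ 1 →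
      ∃ s ∈ S, hN β (Λ c - s) < ε

/-- The index `a* = |a|+1` if `|a| ≤ 1`, `a* = |a|` if `|a| ≥ 2`. -/
def astar (a : ℤ) : ℤ := if |a| ≤ 1 then |a| + 1 else |a|

/-- `i`-th component of the unit vector `evec k`. -/
def evecC (i : Fin 2) (k : Freq) : ℝ := if i = 0 then (evec k).1 else (evec k).2

/-- Fourier coefficients (over all of `ℤ²`) of the scalar component `u_i` of a
divergence-free field with coefficients `c`. -/
def compCoef (i : Fin 2) (c : Coef) : ℤ × ℤ → ℂ := fun n =>
  if h : n ≠ 0 then c ⟨n, h⟩ * ((evecC i ⟨n, h⟩ : ℝ) : ℂ) else 0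

/-- Convolution: Fourier coefficients of a pointwise product of two scalar
functions. -/
def convC (F G : ℤ × ℤ → ℂ) : ℤ × ℤ → ℂ := fun n => ∑' m : ℤ × ℤ, F m * G (n - m)

/-- Squared homogeneous Sobolev norm of a scalar function given by its Fourier
coefficients over `ℤ²`. -/
def hSqScalar (α : ℝ) (F : ℤ × ℤ → ℂ) : ℝ := ∑' k : Freq, lam k ^ α * ‖F k.1‖ ^ 2

/-- `‖u vᵀ‖²_{Ḣ^α} = Σ_{i,j=1}^2 ‖u_i v_j‖²_{Ḣ^α}`. -/
def hSqMat (α : ℝ) (c d : Coef) : ℝ :=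
  ∑ i : Fin 2, ∑ j : Fin 2, hSqScalar α (convC (compCoef i c) (compCoef j d))

/-- The character `exp(2πi k·x)`. -/
def efun (k : Freq) (x : ℝ × ℝ) : ℂ :=
  Complex.exp ((((2 * Real.pi : ℝ)) : ℂ) * Complex.I *
    ((k.1.1 : ℂ) * (x.1 : ℂ) + (k.1.2 : ℂ) * (x.2 : ℂ)))

/-- Pointwise evaluation of the `i`-th component of the field. -/
def evalComp (i : Fin 2) (c : Coef) (x : ℝ × ℝ) : ℂ :=
  ∑' k, c k * ((evecC i k : ℝ) : ℂ) * efun k x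

/-- Supremum norm (`C⁰`-norm) of the field. -/
def c0N (c : Coef) : ℝ := ⨆ x : ℝ × ℝ, max ‖evalComp 0 c x‖ ‖evalComp 1 c x‖

/-- The partial derivative `∂_j` acting on divergence-free fields. -/
def pderiv (j : Fin 2) (c : Coef) : Coef := fun k =>
  (((2 * Real.pi : ℝ) : ℂ) * Complex.I) *
    (if j = 0 then ((k.1.1 : ℤ) : ℂ) else ((k.1.2 : ℤ) : ℂ)) * c k

/-- `C¹`-norm of the field. -/
def c1N (c : Coef) : ℝ := c0N c + c0N (pderiv 0 c) + c0N (pderiv 1 c)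

/-- Norm of the multiplier space `B^ℓ`: `C^ℓ(Ω)²` for `ℓ ≤ 1` and `Ḣ^ℓ` for
`ℓ ≥ 2`. -/
def bN (ℓ : ℕ) (c : Coef) : ℝ :=
  if ℓ = 0 then c0N c else if ℓ = 1 then c1N c else hN (ℓ : ℝ) c

end NS2D

namespace NS2D

/-!
Since `B[u, v] = P ∇·(u ⊗ v)`, the bilinear symbol of `B` at output frequency `k` is at most
`2π|k|`. Hence `‖B[v, w]‖_{Ḣ^a}` and `‖B[w, v]‖_{Ḣ^a}` are both at most the `Ḣ^σ` norm, `σ = a + 1`,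
of the commutative convolution `|v̂| ⋆ |ŵ|`. If `p`, `q`, `r` are the moduli of the two input
frequencies and of their sum, all at least `1`, then for `s ≤ b`, `s ≤ b + σ` and `σ ≤ b` the
triangle inequality gives `r ^ σ ≤ 2 ^ |σ| (p ^ (-s) + q ^ (-s)) p ^ b q ^ σ`. Choosing `s > 1`
makes `|n| ^ (-2s)` summable over `ℤ² ∖ {0}`, so the Cauchy–Schwarz inequality controls the
convolution in `ℓ²`.
-/

open scoped ENNReal NNReal

section Convolution

theorem sq_tsum_mul_le_tsum_sq_mul_tsum_sq {ι : Type*} (f g : ι → ℝ≥0∞) :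
    (∑' i, f i * g i) ^ 2 ≤ (∑' i, f i ^ 2) * ∑' i, g i ^ 2 := by
  have holder : ∑' i, f i * g i ≤
      (∑' i, f i ^ 2) ^ (1 / 2 : ℝ) * (∑' i, g i ^ 2) ^ (1 / 2 : ℝ) := by
    rw [ENNReal.tsum_eq_iSup_sum]
    refine iSup_le fun s => ?_
    refine (ENNReal.inner_le_Lp_mul_Lq s f g Real.HolderConjugate.two_two).trans ?_
    simp only [ENNReal.rpow_two]
    gcongr <;> exact ENNReal.sum_le_tsum s
  calc (∑' i, f i * g i) ^ 2
      ≤ ((∑' i, f i ^ 2) ^ (1 / 2 : ℝ) * (∑' i, g i ^ 2) ^ (1 / 2 : ℝ)) ^ 2 := by gcongr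
    _ = (∑' i, f i ^ 2) * ∑' i, g i ^ 2 := by
      rw [mul_pow, ← ENNReal.rpow_two, ← ENNReal.rpow_two, ← ENNReal.rpow_mul,
        ← ENNReal.rpow_mul]
      norm_num

theorem ennreal_add_sq_le (x y : ℝ≥0∞) : (x + y) ^ 2 ≤ 2 * (x ^ 2 + y ^ 2) := by
  have h := ENNReal.rpow_add_le_mul_rpow_add_rpow x y one_le_two
  norm_num at h
  exact h

variable {G : Type*} [AddCommGroup G]

theorem tsum_tsum_mul_sub (f g : G → ℝ≥0∞) :
    ∑' k, ∑' m, f m * g (k - m) = (∑' m, f m) * ∑' n, g n := by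
  rw [ENNReal.tsum_comm, ← ENNReal.tsum_mul_right]
  refine tsum_congr fun m => ?_
  rw [ENNReal.tsum_mul_left]
  congr 1
  exact (Equiv.subRight m).tsum_eq g

theorem tsum_mul_sub_comm (f g : G → ℝ≥0∞) (k : G) :
    ∑' m, f m * g (k - m) = ∑' m, g m * f (k - m) := by
  rw [← (Equiv.subLeft k).tsum_eq]
  simp only [Equiv.subLeft_apply, sub_sub_cancel, mul_comm]

theorem tsum_sq_tsum_mul_mul_sub_le (J f g : G → ℝ≥0∞) :
    ∑' k, (∑' m, J m * f m * g (k - m)) ^ 2 ≤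
      (∑' m, J m ^ 2) * ((∑' m, f m ^ 2) * ∑' n, g n ^ 2) := by
  calc ∑' k, (∑' m, J m * f m * g (k - m)) ^ 2
      ≤ ∑' k, (∑' m, J m ^ 2) * ∑' m, f m ^ 2 * g (k - m) ^ 2 := by
        simp only [mul_assoc, ← mul_pow]
        exact ENNReal.tsum_le_tsum fun k => sq_tsum_mul_le_tsum_sq_mul_tsum_sq _ _
    _ = (∑' m, J m ^ 2) * ((∑' m, f m ^ 2) * ∑' n, g n ^ 2) := by
      rw [ENNReal.tsum_mul_left, tsum_tsum_mul_sub (fun m => f m ^ 2) (fun n => g n ^ 2)]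

theorem tsum_sq_tsum_add_sub_mul_mul_sub_le (J f g : G → ℝ≥0∞) :
    ∑' k, (∑' m, (J m + J (k - m)) * (f m * g (k - m))) ^ 2 ≤
      4 * (∑' m, J m ^ 2) * ((∑' m, f m ^ 2) * ∑' n, g n ^ 2) := by
  have split (k : G) : ∑' m, (J m + J (k - m)) * (f m * g (k - m)) =
      ∑' m, J m * f m * g (k - m) + ∑' m, J m * g m * f (k - m) := by
    rw [tsum_mul_sub_comm (fun m => J m * g m) f k, ← ENNReal.tsum_add]
    exact tsum_congr fun m => by ring
  calc ∑' k, (∑' m, (J m + J (k - m)) * (f m * g (k - m))) ^ 2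
      ≤ ∑' k, 2 * ((∑' m, J m * f m * g (k - m)) ^ 2 + (∑' m, J m * g m * f (k - m)) ^ 2) := by
        simp only [split]
        exact ENNReal.tsum_le_tsum fun k => ennreal_add_sq_le _ _
    _ ≤ 2 * ((∑' m, J m ^ 2) * ((∑' m, f m ^ 2) * ∑' n, g n ^ 2) +
          (∑' m, J m ^ 2) * ((∑' m, g m ^ 2) * ∑' n, f n ^ 2)) := by
        rw [ENNReal.tsum_mul_left, ENNReal.tsum_add]
        gcongr <;> exact tsum_sq_tsum_mul_mul_sub_le _ _ _
    _ = 4 * (∑' m, J m ^ 2) * ((∑' m, f m ^ 2) * ∑' n, g n ^ 2) := by ring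

end Convolution

section TriangleWeights

variable {p q r s t b e σ : ℝ}

theorem rpow_le_two_rpow_abs_mul (hs : 1 ≤ s) (hst : s ≤ t) (hr : 1 ≤ r) (hrst : r ≤ s + t)
    (htrs : t ≤ r + s) (he : 0 ≤ e) (hσe : -σ ≤ e) :
    r ^ σ ≤ 2 ^ |σ| * (s ^ e * t ^ σ) := by
  have hs0 : 0 < s := by linarith
  have ht0 : 0 < t := by linarith
  have hr0 : 0 < r := by linarith
  rcases le_total 0 σ with hσ | hσ
  · calc r ^ σ ≤ (2 * t) ^ σ := by gcongr; linarith
      _ = 2 ^ |σ| * (1 * t ^ σ) := by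
        rw [Real.mul_rpow zero_le_two ht0.le, abs_of_nonneg hσ, one_mul]
      _ ≤ 2 ^ |σ| * (s ^ e * t ^ σ) := by
        gcongr
        exact Real.one_le_rpow hs he
  · have ht_le : t ≤ 2 * s * r := by nlinarith
    calc r ^ σ = (2 * s) ^ (-σ) * (2 * s * r) ^ σ := by
          rw [Real.mul_rpow (x := 2 * s) (by positivity) hr0.le, ← mul_assoc,
            ← Real.rpow_add (by positivity), neg_add_cancel, Real.rpow_zero, one_mul]
      _ ≤ (2 * s) ^ (-σ) * t ^ σ := by
        exact mul_le_mul_of_nonneg_left (Real.rpow_le_rpow_of_nonpos ht0 ht_le hσ) (by positivity)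
      _ = 2 ^ |σ| * (s ^ (-σ) * t ^ σ) := by
        rw [Real.mul_rpow zero_le_two hs0.le, abs_of_nonpos hσ, mul_assoc]
      _ ≤ 2 ^ |σ| * (s ^ e * t ^ σ) := by gcongr

theorem rpow_le_two_rpow_abs_mul_add_mul (hp : 1 ≤ p) (hq : 1 ≤ q) (hr : 1 ≤ r)
    (hrpq : r ≤ p + q) (hqrp : q ≤ r + p) (hprq : p ≤ r + q)
    (hsb : s ≤ b) (hsσ : s ≤ b + σ) (hσb : σ ≤ b) :
    r ^ σ ≤ 2 ^ |σ| * ((p ^ (-s) + q ^ (-s)) * (p ^ b * q ^ σ)) := by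
  have hp0 : 0 < p := by linarith
  have hq0 : 0 < q := by linarith
  rcases le_total p q with hpq | hqp
  · calc r ^ σ ≤ 2 ^ |σ| * (p ^ (-s + b) * q ^ σ) :=
          rpow_le_two_rpow_abs_mul hp hpq hr hrpq hqrp (by linarith) (by linarith)
      _ = 2 ^ |σ| * (p ^ (-s) * (p ^ b * q ^ σ)) := by rw [Real.rpow_add hp0, mul_assoc]
      _ ≤ 2 ^ |σ| * ((p ^ (-s) + q ^ (-s)) * (p ^ b * q ^ σ)) := by
        gcongr
        exact le_add_of_nonneg_right (by positivity)
  · have swap : q ^ b * p ^ σ ≤ p ^ b * q ^ σ := by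
      calc q ^ b * p ^ σ = q ^ (b - σ) * (p ^ σ * q ^ σ) := by
            rw [mul_left_comm, ← Real.rpow_add hq0, sub_add_cancel, mul_comm]
        _ ≤ p ^ (b - σ) * (p ^ σ * q ^ σ) := by
          gcongr
        _ = p ^ b * q ^ σ := by rw [← mul_assoc, ← Real.rpow_add hp0, sub_add_cancel]
    calc r ^ σ ≤ 2 ^ |σ| * (q ^ (-s + b) * p ^ σ) :=
          rpow_le_two_rpow_abs_mul hq hqp hr (by linarith) hprq (by linarith) (by linarith)
      _ = 2 ^ |σ| * (q ^ (-s) * (q ^ b * p ^ σ)) := by rw [Real.rpow_add hq0, mul_assoc]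
      _ ≤ 2 ^ |σ| * ((p ^ (-s) + q ^ (-s)) * (p ^ b * q ^ σ)) := by
        gcongr
        exact le_add_of_nonneg_left (by positivity)

end TriangleWeights

section Frequencies

/-- The modulus `2π|n|` of the wave vector of `n ∈ ℤ²`, so that `λ_k` is its square. The Euclidean
norm is that of `ℂ`, since `ℤ × ℤ` itself carries the sup norm. -/
def freqNorm : AddGroupSeminorm (ℤ × ℤ) where
  toFun n := 2 * Real.pi * ‖(n.1 : ℂ) + n.2 * Complex.I‖
  map_zero' := by simp
  add_le' m n := by
    rw [← mul_add]
    gcongr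
    refine le_of_eq_of_le (congrArg _ ?_) (norm_add_le _ _)
    push_cast [Prod.fst_add, Prod.snd_add]
    ring
  neg' n := by
    rw [← norm_neg ((n.1 : ℂ) + n.2 * Complex.I)]
    congr 2
    push_cast [Prod.fst_neg, Prod.snd_neg]
    ring

theorem freqNorm_sq (n : ℤ × ℤ) :
    freqNorm n ^ 2 = 4 * Real.pi ^ 2 * ((n.1 : ℝ) ^ 2 + (n.2 : ℝ) ^ 2) := by
  have h : ‖(n.1 : ℂ) + n.2 * Complex.I‖ ^ 2 = (n.1 : ℝ) ^ 2 + (n.2 : ℝ) ^ 2 := by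
    rw [Complex.sq_norm]
    exact_mod_cast Complex.normSq_add_mul_I (n.1 : ℝ) (n.2 : ℝ)
  change (2 * Real.pi * ‖(n.1 : ℂ) + n.2 * Complex.I‖) ^ 2 = _
  rw [mul_pow, h]
  ring

theorem lam_eq_freqNorm_sq (k : Freq) : lam k = freqNorm k.1 ^ 2 := (freqNorm_sq k.1).symm

theorem norm_le_freqNorm (n : ℤ × ℤ) : ‖n‖ ≤ freqNorm n := by
  have sq_le (x y : ℝ) : x ^ 2 ≤ 4 * Real.pi ^ 2 * (x ^ 2 + y ^ 2) := by
    have one_le : 1 ≤ 4 * Real.pi ^ 2 := by nlinarith [Real.pi_gt_three]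
    calc x ^ 2 ≤ x ^ 2 + y ^ 2 := le_add_of_nonneg_right (sq_nonneg y)
      _ ≤ 4 * Real.pi ^ 2 * (x ^ 2 + y ^ 2) := le_mul_of_one_le_left (by positivity) one_le
  refine max_le ?_ ?_ <;> refine abs_le_of_sq_le_sq ?_ (apply_nonneg _ _) <;> rw [freqNorm_sq]
  · exact sq_le _ _
  · rw [add_comm]
    exact sq_le _ _

theorem one_le_freqNorm (k : Freq) : 1 ≤ freqNorm k.1 := by
  refine le_trans ?_ (norm_le_freqNorm k.1)
  have h : k.1.1 ≠ 0 ∨ k.1.2 ≠ 0 := by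
    by_contra! h0
    exact k.2 (Prod.ext h0.1 h0.2)
  refine le_max_iff.2 (h.imp ?_ ?_)
  all_goals
    intro h0
    rw [Int.norm_eq_abs]
    exact_mod_cast Int.one_le_abs h0

theorem summable_freqNorm_rpow {s : ℝ} (hs : 2 < s) : Summable fun n => freqNorm n ^ (-s) := by
  have h : Summable fun n : ℤ × ℤ => ‖n‖ ^ (-s) := by
    refine ((finTwoArrowEquiv ℤ).symm.summable_iff.2
      (EisensteinSeries.summable_one_div_norm_rpow hs)).congr fun n => ?_
    simp [EisensteinSeries.norm_eq_max_natAbs, Prod.norm_def, Int.norm_eq_abs]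
  refine h.of_nonneg_of_le (fun n => by positivity) fun n => ?_
  rcases eq_or_ne n 0 with rfl | hn
  · simp
  · exact Real.rpow_le_rpow_of_nonpos (norm_pos_iff.2 hn) (norm_le_freqNorm n) (by linarith)

theorem dotR_sq_le (a b : ℝ × ℝ) : dotR a b ^ 2 ≤ (a.1 ^ 2 + a.2 ^ 2) * (b.1 ^ 2 + b.2 ^ 2) := by
  unfold dotR
  nlinarith [sq_nonneg (a.1 * b.2 - a.2 * b.1)]

theorem evec_fst_sq_add_snd_sq (k : Freq) : (evec k).1 ^ 2 + (evec k).2 ^ 2 = 1 := by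
  have hk : 0 < knormSq k := by
    have : 0 < lam k := by
      rw [lam_eq_freqNorm_sq]
      nlinarith [one_le_freqNorm k]
    exact pos_of_mul_pos_right this (by positivity)
  simp only [evec, div_pow, neg_sq]
  rw [Real.sq_sqrt hk.le, ← add_div, div_eq_one_iff_eq hk.ne', knormSq, add_comm]

theorem abs_dotR_evec_evec_le_one (k l : Freq) : |dotR (evec k) (evec l)| ≤ 1 := by
  have h := dotR_sq_le (evec k) (evec l)
  rwa [evec_fst_sq_add_snd_sq, evec_fst_sq_add_snd_sq, one_mul, sq_le_one_iff_abs_le_one] at h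

theorem two_pi_mul_abs_dotR_evec_fvec_le (k l : Freq) :
    2 * Real.pi * |dotR (evec k) (fvec l)| ≤ freqNorm l.1 := by
  have h : dotR (evec k) (fvec l) ^ 2 ≤ (l.1.1 : ℝ) ^ 2 + (l.1.2 : ℝ) ^ 2 := by
    simpa only [evec_fst_sq_add_snd_sq, one_mul, fvec] using dotR_sq_le (evec k) (fvec l)
  refine le_of_sq_le_sq ?_ (apply_nonneg _ _)
  rw [mul_pow, sq_abs, freqNorm_sq, mul_pow]
  norm_num
  gcongr

theorem dotR_evec_fvec_eq_of_add {k m n : Freq} (h : m.1 + n.1 = k.1) :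
    dotR (evec m) (fvec n) = dotR (evec m) (fvec k) := by
  simp only [dotR, evec, fvec, ← h, Prod.fst_add, Prod.snd_add]
  push_cast
  ring

/-- As `e_m ⟂ m`, the factor `n` in the symbol may be replaced by `k = m + n`: this is the
divergence form `B[u, v] = P ∇·(u ⊗ v)`, in which no derivative falls on `v` alone. -/
theorem two_pi_mul_abs_symbol_le {k m n : Freq} (h : m.1 + n.1 = k.1) :
    2 * Real.pi * |dotR (evec m) (fvec n) * dotR (evec n) (evec k)| ≤ freqNorm k.1 := by
  rw [abs_mul, ← mul_assoc, dotR_evec_fvec_eq_of_add h]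
  exact (mul_le_of_le_one_right (by positivity) (abs_dotR_evec_evec_le_one n k)).trans
    (two_pi_mul_abs_dotR_evec_fvec_le m k)

end Frequencies

section Estimates

/-- The Fourier multiplier `(2π|n|)^s` of `(-Δ)^(s/2)`, with values in `ℝ≥0∞` so that series of
weighted coefficients need no summability hypothesis. At `n = 0` it takes the junk value `0 ^ s`,
which is `0` for `s ≠ 0`, even when `s < 0`. -/
def sobolevWeight (s : ℝ) (n : ℤ × ℤ) : ℝ≥0∞ := ENNReal.ofReal (freqNorm n ^ s)

/-- The moduli `|c n|` of the coefficients of a mean-zero field, extended by `0` to `n = 0`. -/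
def absCoef (c : Coef) (n : ℤ × ℤ) : ℝ≥0∞ := if h : n ≠ 0 then ‖c ⟨n, h⟩‖ₑ else 0

/-- The squared `Ḣ^α` norm with values in `ℝ≥0∞`: unlike `hSq`, it is `∞` (and not `0`) outside
`Ḣ^α`. -/
def eHSq (α : ℝ) (c : Coef) : ℝ≥0∞ := ∑' k, ENNReal.ofReal (lam k ^ α * ‖c k‖ ^ 2)

theorem lam_rpow_mul_norm_sq_nonneg (α : ℝ) (c : Coef) (k : Freq) :
    0 ≤ lam k ^ α * ‖c k‖ ^ 2 := by
  rw [lam_eq_freqNorm_sq]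
  positivity

theorem finH_iff_eHSq_ne_top {α : ℝ} {c : Coef} : FinH α c ↔ eHSq α c ≠ ∞ := by
  refine ⟨Summable.tsum_ofReal_ne_top, fun h => (ENNReal.summable_toReal h).congr fun k => ?_⟩
  exact ENNReal.toReal_ofReal (lam_rpow_mul_norm_sq_nonneg α c k)

theorem hN_eq_sqrt_toReal_eHSq (α : ℝ) (c : Coef) : hN α c = √(eHSq α c).toReal := by
  rw [hN, hSq, eHSq, ENNReal.tsum_toReal_eq fun _ => ENNReal.ofReal_ne_top]
  simp only [ENNReal.toReal_ofReal (lam_rpow_mul_norm_sq_nonneg α c _)]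

@[simp]
theorem absCoef_zero (c : Coef) : absCoef c 0 = 0 := by simp [absCoef]

@[simp]
theorem absCoef_freq (c : Coef) (k : Freq) : absCoef c k.1 = ‖c k‖ₑ := dif_pos k.2

theorem sobolevWeight_mul_enorm_sq (s : ℝ) (c : Coef) (k : Freq) :
    (sobolevWeight s k.1 * ‖c k‖ₑ) ^ 2 = ENNReal.ofReal (lam k ^ s * ‖c k‖ ^ 2) := by
  rw [sobolevWeight, ← ofReal_norm, ← ENNReal.ofReal_mul (by positivity),
    ← ENNReal.ofReal_pow (by positivity), mul_pow, lam_eq_freqNorm_sq,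
    Real.rpow_pow_comm (apply_nonneg _ _)]

theorem tsum_sobolevWeight_mul_absCoef_sq (s : ℝ) (c : Coef) :
    ∑' n, (sobolevWeight s n * absCoef c n) ^ 2 = eHSq s c := by
  simp only [eHSq, ← sobolevWeight_mul_enorm_sq, ← absCoef_freq]
  refine (Function.Injective.tsum_eq (g := fun k : Freq => k.1) Subtype.val_injective
    (f := fun n => (sobolevWeight s n * absCoef c n) ^ 2) fun n hn => ?_).symm
  rcases eq_or_ne n 0 with rfl | h0
  · simp at hn
  · exact ⟨⟨n, h0⟩, rfl⟩

theorem tsum_sobolevWeight_neg_sq_ne_top {s : ℝ} (hs : 1 < s) :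
    ∑' n, sobolevWeight (-s) n ^ 2 ≠ ∞ := by
  have h (n : ℤ × ℤ) :
      sobolevWeight (-s) n ^ 2 = ENNReal.ofReal (freqNorm n ^ (-(s * 2))) := by
    rw [sobolevWeight, ← ENNReal.ofReal_pow (by positivity),
      ← Real.rpow_mul_natCast (by positivity)]
    norm_num
  simp only [h]
  exact (summable_freqNorm_rpow (by linarith)).tsum_ofReal_ne_top

theorem sobolevWeight_add_le {s b σ : ℝ} (hsb : s ≤ b) (hsσ : s ≤ b + σ) (hσb : σ ≤ b)
    {k m n : Freq} (h : m.1 + n.1 = k.1) :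
    sobolevWeight σ k.1 ≤ ENNReal.ofReal (2 ^ |σ|) *
      ((sobolevWeight (-s) m.1 + sobolevWeight (-s) n.1) *
        (sobolevWeight b m.1 * sobolevWeight σ n.1)) := by
  have hk : freqNorm k.1 ≤ freqNorm m.1 + freqNorm n.1 := h ▸ map_add_le_add freqNorm _ _
  have hn : freqNorm n.1 ≤ freqNorm k.1 + freqNorm m.1 := by
    rw [eq_sub_of_add_eq' h]
    exact map_sub_le_add freqNorm _ _
  have hm : freqNorm m.1 ≤ freqNorm k.1 + freqNorm n.1 := by
    rw [eq_sub_of_add_eq h]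
    exact map_sub_le_add freqNorm _ _
  simp only [sobolevWeight]
  rw [← ENNReal.ofReal_add (by positivity) (by positivity), ← ENNReal.ofReal_mul (by positivity),
    ← ENNReal.ofReal_mul (by positivity), ← ENNReal.ofReal_mul (by positivity)]
  exact ENNReal.ofReal_le_ofReal <| rpow_le_two_rpow_abs_mul_add_mul (one_le_freqNorm m)
    (one_le_freqNorm n) (one_le_freqNorm k) hk hn hm hsb hsσ hσb

theorem sobolevWeight_mul_tsum_le {s b σ : ℝ} (hsb : s ≤ b) (hsσ : s ≤ b + σ) (hσb : σ ≤ b)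
    (c d : Coef) (k : Freq) :
    sobolevWeight σ k.1 * ∑' m, absCoef c m * absCoef d (k.1 - m) ≤
      ENNReal.ofReal (2 ^ |σ|) * ∑' m, (sobolevWeight (-s) m + sobolevWeight (-s) (k.1 - m)) *
        ((sobolevWeight b m * absCoef c m) *
          (sobolevWeight σ (k.1 - m) * absCoef d (k.1 - m))) := by
  rw [← ENNReal.tsum_mul_left, ← ENNReal.tsum_mul_left]
  refine ENNReal.tsum_le_tsum fun m => ?_
  rcases eq_or_ne m 0 with rfl | hm
  · simp
  rcases eq_or_ne (k.1 - m) 0 with hn | hn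
  · simp [hn]
  have weight_le := sobolevWeight_add_le hsb hsσ hσb (k := k) (m := ⟨m, hm⟩) (n := ⟨k.1 - m, hn⟩)
    (add_sub_cancel m k.1)
  refine (mul_le_mul_left weight_le _).trans_eq ?_
  ring

theorem tsum_sq_sobolevWeight_mul_tsum_le {s b σ : ℝ} (hsb : s ≤ b) (hsσ : s ≤ b + σ)
    (hσb : σ ≤ b) (c d : Coef) :
    ∑' k : Freq, (sobolevWeight σ k.1 * ∑' m, absCoef c m * absCoef d (k.1 - m)) ^ 2 ≤
      ENNReal.ofReal (2 ^ |σ|) ^ 2 * (4 * ∑' n, sobolevWeight (-s) n ^ 2) *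
        (eHSq b c * eHSq σ d) := by
  set C := ENNReal.ofReal (2 ^ |σ|)
  set J := sobolevWeight (-s)
  set f := fun n => sobolevWeight b n * absCoef c n
  set g := fun n => sobolevWeight σ n * absCoef d n
  calc ∑' k : Freq, (sobolevWeight σ k.1 * ∑' m, absCoef c m * absCoef d (k.1 - m)) ^ 2
      ≤ ∑' k : Freq, (C * ∑' m, (J m + J (k.1 - m)) * (f m * g (k.1 - m))) ^ 2 :=
        ENNReal.tsum_le_tsum fun k =>
          pow_le_pow_left' (sobolevWeight_mul_tsum_le hsb hsσ hσb c d k) 2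
    _ ≤ ∑' k, (C * ∑' m, (J m + J (k - m)) * (f m * g (k - m))) ^ 2 :=
        ENNReal.tsum_comp_le_tsum_of_injective (f := fun k : Freq => k.1)
          Subtype.val_injective _
    _ = C ^ 2 * ∑' k, (∑' m, (J m + J (k - m)) * (f m * g (k - m))) ^ 2 := by
        simp only [mul_pow, ENNReal.tsum_mul_left]
    _ ≤ C ^ 2 * (4 * (∑' n, J n ^ 2) * ((∑' n, f n ^ 2) * ∑' n, g n ^ 2)) := by
        gcongr
        exact tsum_sq_tsum_add_sub_mul_mul_sub_le J f g
    _ = C ^ 2 * (4 * ∑' n, J n ^ 2) * (eHSq b c * eHSq σ d) := by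
        rw [tsum_sobolevWeight_mul_absCoef_sq, tsum_sobolevWeight_mul_absCoef_sq, mul_assoc (C ^ 2)]

theorem enorm_symbol_mul_le {k m n : Freq} (h : m.1 + n.1 = k.1) (x y : ℂ) :
    ‖((2 * Real.pi : ℝ) : ℂ) * Complex.I *
        (x * y * ((dotR (evec m) (fvec n) * dotR (evec n) (evec k) : ℝ) : ℂ))‖ₑ ≤
      sobolevWeight 1 k.1 * (‖x‖ₑ * ‖y‖ₑ) := by
  simp only [sobolevWeight, Real.rpow_one, ← ofReal_norm]
  rw [← ENNReal.ofReal_mul (norm_nonneg _), ← ENNReal.ofReal_mul (apply_nonneg _ _)]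
  refine ENNReal.ofReal_le_ofReal ?_
  simp only [norm_mul, Complex.norm_I, Complex.norm_real, mul_one, Real.norm_eq_abs,
    abs_of_pos Real.two_pi_pos, ← abs_mul]
  calc 2 * Real.pi * (‖x‖ * ‖y‖ * |dotR (evec m) (fvec n) * dotR (evec n) (evec k)|)
      = 2 * Real.pi * |dotR (evec m) (fvec n) * dotR (evec n) (evec k)| * (‖x‖ * ‖y‖) := by
        ring
    _ ≤ freqNorm k.1 * (‖x‖ * ‖y‖) := by
      gcongr
      exact two_pi_mul_abs_symbol_le h

theorem enorm_Bc_le (c d : Coef) (k : Freq) :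
    ‖Bc c d k‖ₑ ≤ sobolevWeight 1 k.1 * ∑' m, absCoef c m * absCoef d (k.1 - m) := by
  rw [Bc, ← tsum_mul_left, ← ENNReal.tsum_mul_left]
  refine enorm_tsum_le_tsum_enorm.trans <| le_trans (ENNReal.tsum_le_tsum fun m => ?_)
    (ENNReal.tsum_comp_le_tsum_of_injective (f := fun m : Freq => m.1) Subtype.val_injective _)
  rw [absCoef_freq]
  split_ifs with h
  · rw [absCoef, dif_pos h]
    exact enorm_symbol_mul_le (n := ⟨k.1 - m.1, h⟩) (add_sub_cancel m.1 k.1) _ _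
  · simp

theorem eHSq_Bc_le_tsum (a : ℝ) (c d : Coef) :
    eHSq a (Bc c d) ≤
      ∑' k : Freq, (sobolevWeight (a + 1) k.1 * ∑' m, absCoef c m * absCoef d (k.1 - m)) ^ 2 := by
  simp only [eHSq, ← sobolevWeight_mul_enorm_sq]
  refine ENNReal.tsum_le_tsum fun k => pow_le_pow_left' ?_ 2
  have weight_mul : sobolevWeight (a + 1) k.1 = sobolevWeight a k.1 * sobolevWeight 1 k.1 := by
    have hk : 0 < freqNorm k.1 := one_pos.trans_le (one_le_freqNorm k)
    rw [sobolevWeight, Real.rpow_add hk, ENNReal.ofReal_mul (by positivity), sobolevWeight,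
      sobolevWeight]
  rw [weight_mul, mul_assoc]
  gcongr
  exact enorm_Bc_le c d k

theorem exists_eHSq_Bc_le {a b : ℝ} (hb : 1 < b) (hab : a + 1 ≤ b) (hba : 0 < a + b) :
    ∃ K : ℝ≥0, ∀ c d : Coef, eHSq a (Bc c d) ≤ K * (eHSq b c * eHSq (a + 1) d) ∧
      eHSq a (Bc d c) ≤ K * (eHSq b c * eHSq (a + 1) d) := by
  obtain ⟨s, hs, hsm⟩ : ∃ s, 1 < s ∧ s ≤ min b (b + (a + 1)) :=
    ⟨_, lt_min hb (by linarith), le_rfl⟩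
  obtain ⟨hsb, hsσ⟩ := le_min_iff.1 hsm
  have const_ne_top :
      ENNReal.ofReal (2 ^ |a + 1|) ^ 2 * (4 * ∑' n, sobolevWeight (-s) n ^ 2) ≠ ∞ := by
    have := tsum_sobolevWeight_neg_sq_ne_top hs
    finiteness
  obtain ⟨K, hK⟩ := WithTop.ne_top_iff_exists.1 const_ne_top
  have product_le (c d : Coef) := tsum_sq_sobolevWeight_mul_tsum_le hsb hsσ hab c d
  rw [← hK] at product_le
  refine ⟨K, fun c d => ⟨(eHSq_Bc_le_tsum a c d).trans (product_le c d), ?_⟩⟩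
  refine (eHSq_Bc_le_tsum a d c).trans (le_of_eq_of_le ?_ (product_le c d))
  simp only [tsum_mul_sub_comm (absCoef d)]

theorem finH_of_eHSq_le {α β γ : ℝ} {u c d : Coef} {K : ℝ≥0}
    (h : eHSq α u ≤ K * (eHSq β c * eHSq γ d)) (hc : FinH β c) (hd : FinH γ d) : FinH α u := by
  rw [finH_iff_eHSq_ne_top] at *
  exact ne_top_of_le_ne_top (by finiteness) h

theorem hN_le_of_eHSq_le {α β γ : ℝ} {u c d : Coef} {K : ℝ≥0}
    (h : eHSq α u ≤ K * (eHSq β c * eHSq γ d)) (hc : FinH β c) (hd : FinH γ d) :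
    hN α u ≤ √K * (hN β c * hN γ d) := by
  rw [finH_iff_eHSq_ne_top] at hc hd
  have h_real := ENNReal.toReal_mono (by finiteness) h
  simp only [ENNReal.toReal_mul, ENNReal.coe_toReal] at h_real
  simp only [hN_eq_sqrt_toReal_eHSq]
  rw [← Real.sqrt_mul ENNReal.toReal_nonneg, ← Real.sqrt_mul K.coe_nonneg]
  exact Real.sqrt_le_sqrt h_real

end Estimates

theorem statement13_general {a b : ℝ} (hb : 1 < b) (hab : a + 1 ≤ b) (hba : 0 < a + b) :
    ∃ C : ℝ, 0 < C ∧ ∀ v w : Coef, FinH b v → FinH (a + 1) w →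
      FinH a (Bc v w) ∧ FinH a (Bc w v) ∧
        hN a (Bc v w) + hN a (Bc w v) ≤ C * hN b v * hN (a + 1) w := by
  obtain ⟨K, hK⟩ := exists_eHSq_Bc_le hb hab hba
  refine ⟨2 * √K + 1, by positivity, fun v w hv hw => ?_⟩
  obtain ⟨hvw, hwv⟩ := hK v w
  refine ⟨finH_of_eHSq_le hvw hv hw, finH_of_eHSq_le hwv hv hw, ?_⟩
  have norm_nonneg : 0 ≤ hN b v * hN (a + 1) w :=
    mul_nonneg (Real.sqrt_nonneg _) (Real.sqrt_nonneg _)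
  linarith [hN_le_of_eHSq_le hvw hv hw, hN_le_of_eHSq_le hwv hv hw]

/-- Proposition `PropProdSob`. For `a ∈ ℤ` and
`b = max{|a|+1, 2}`, there is `C = C(a) > 0` such that for all `v ∈ Ḣ^b_⋄`
and `w ∈ Ḣ^{a+1}_⋄`,
`‖B[v,w]‖_{Ḣ^a} + ‖B[w,v]‖_{Ḣ^a} ≤ C ‖v‖_{Ḣ^b} ‖w‖_{Ḣ^{a+1}}`; in
particular, if `a ≥ 1` then
`‖B[v,w]‖_{Ḣ^a} + ‖B[w,v]‖_{Ḣ^a} ≤ C ‖v‖_{Ḣ^{a+1}} ‖w‖_{Ḣ^{a+1}}`. -/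
theorem statement13 (a : ℤ) :
    (∃ C : ℝ, 0 < C ∧
      ∀ v w : Coef, MemH ((max (|a| + 1) 2 : ℤ) : ℝ) v → MemH ((a : ℝ) + 1) w →
        hN (a : ℝ) (Bc v w) + hN (a : ℝ) (Bc w v) ≤
          C * hN ((max (|a| + 1) 2 : ℤ) : ℝ) v * hN ((a : ℝ) + 1) w) ∧
    (1 ≤ a → ∃ C : ℝ, 0 < C ∧
      ∀ v w : Coef, MemH ((a : ℝ) + 1) v → MemH ((a : ℝ) + 1) w →
        hN (a : ℝ) (Bc v w) + hN (a : ℝ) (Bc w v) ≤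
          C * hN ((a : ℝ) + 1) v * hN ((a : ℝ) + 1) w) := by
  have of_general {b : ℝ} (h1 : 1 < b) (h2 : a + 1 ≤ b) (h3 : 0 < a + b) :
      ∃ C : ℝ, 0 < C ∧ ∀ v w : Coef, MemH b v → MemH (a + 1) w →
        hN a (Bc v w) + hN a (Bc w v) ≤ C * hN b v * hN (a + 1) w := by
    obtain ⟨C, hC, h⟩ := statement13_general h1 h2 h3
    exact ⟨C, hC, fun v w hv hw => (h v w hv.2 hw.2).2.2⟩
  refine ⟨of_general ?_ ?_ ?_, fun ha => of_general ?_ le_rfl ?_⟩ <;> norm_cast <;> grind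

end NS2D
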